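/- Let (u,φ), (v,ψ) ∈ Ũ(H). If d̃((u,φ), (v,ψ)) ≤ π/(2N), then d̃((u,φ), (v,ψ)) = d(u,v) = m, where d is the geodesic distance on U(H). -/

import Mathlib

noncomputable section

abbrev Hsp (N : ℕ) : Type := EuclideanSpace ℂ (Fin N)

abbrev Op (N : ℕ) : Type := Hsp N →L[ℂ] Hsp N

/-- A map `γ : ℝ → E` is piecewise C¹ on `[a,b]` if there is a partition
`a = τ 0 ≤ τ 1 ≤ ⋯ ≤ τ n = b` such that `γ` is C¹ on each subinterval. -/
def PiecewiseC1On {E : Type*} [NormedAddCommGroup E] [NormedSpace ℝ E]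
    (γ : ℝ → E) (a b : ℝ) : Prop :=
  ∃ (n : ℕ) (τ : ℕ → ℝ), τ 0 = a ∧ τ n = b ∧ (∀ i < n, τ i ≤ τ (i + 1)) ∧
    ∀ i < n, ContDiffOn ℝ 1 γ (Set.Icc (τ i) (τ (i + 1)))

/-- The length `L(γ) = ∫_a^b ‖γ'(t)‖ dt` of a curve. -/
def pathLength {E : Type*} [NormedAddCommGroup E] [NormedSpace ℝ E]
    (γ : ℝ → E) (a b : ℝ) : ℝ :=
  ∫ t in a..b, ‖deriv γ t‖

/-- Geodesic distance on the unitary group of `EuclideanSpace ℂ (Fin N)`, for the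
Finsler metric given by the operator norm: the infimum of lengths of piecewise C¹
curves in the unitary group joining `u` to `v`. -/
def geoDist (N : ℕ) (u v : Op N) : ℝ :=
  sInf {l | ∃ (a b : ℝ) (γ : ℝ → Op N), a ≤ b ∧ PiecewiseC1On γ a b ∧
    (∀ t ∈ Set.Icc a b, γ t ∈ unitary (Op N)) ∧ γ a = u ∧ γ b = v ∧
    l = pathLength γ a b}

/-- `(u, φ)` belongs to the realization `Ũ(H) = {(u,φ) : det u = e^{iφ}}` of the
universal cover of the unitary group. -/
def InUCover (N : ℕ) (u : Op N) (φ : ℝ) : Prop :=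
  u ∈ unitary (Op N) ∧
    LinearMap.det (u : Hsp N →ₗ[ℂ] Hsp N) = Complex.exp (φ * Complex.I)

/-- Geodesic distance on the universal cover `Ũ(H)`: the infimum of the lengths
`∫ ‖γ'(t)‖ dt` over piecewise C¹ curves `t ↦ (γ t, f t)` in `Ũ(H)` joining
`(u, φ)` to `(v, ψ)`. -/
def ucoverDist (N : ℕ) (u : Op N) (φ : ℝ) (v : Op N) (ψ : ℝ) : ℝ :=
  sInf {l | ∃ (a b : ℝ) (γ : ℝ → Op N) (f : ℝ → ℝ), a ≤ b ∧
    PiecewiseC1On (fun t => (γ t, f t)) a b ∧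
    (∀ t ∈ Set.Icc a b, InUCover N (γ t) (f t)) ∧
    γ a = u ∧ f a = φ ∧ γ b = v ∧ f b = ψ ∧
    l = pathLength γ a b}

/-- The multiset of eigenvalues (with multiplicity) of an endomorphism, i.e. the
roots of its characteristic polynomial. -/
def eigenvalueMultiset (N : ℕ) (w : Op N) : Multiset ℂ :=
  (LinearMap.charpoly (w : Hsp N →ₗ[ℂ] Hsp N)).roots

/-- `θ ∈ R`: `(e^{iθ_j})_j` is the family of eigenvalues of `w` (with multiplicity)
and `∑ θ_j = c`. -/
def InRSet (N : ℕ) (w : Op N) (c : ℝ) (θ : Fin N → ℝ) : Prop :=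
  Multiset.map (fun j => Complex.exp ((θ j : ℂ) * Complex.I)) Finset.univ.val
      = eigenvalueMultiset N w ∧ ∑ j, θ j = c

/-- `m = min { max_j |θ_j| : θ ∈ R }`. -/
def mval (N : ℕ) (w : Op N) (c : ℝ) : ℝ :=
  sInf {x | ∃ θ : Fin N → ℝ, InRSet N w c θ ∧ x = ⨆ j, |θ j|}

end

/-!
Let `x` be a unit eigenvector of `v u⁻¹` with eigenvalue `λ_j`. Along a path of unitaries `γ` from
`u` to `v`, the vector `γ(t) u⁻¹ x` moves on the unit sphere no faster than `γ` moves in operator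
norm, and has to turn by the angle `|arg λ_j|`; hence `max_j |arg λ_j| ≤ d(u, v)`. For a path
`(γ, f)` in the cover of length less than `π / N`, the sum of the arguments of the eigenvalues of
`γ(t) γ(a)⁻¹` stays in `(-π, π)` and agrees with `f(t) - f(a)` modulo `2π`, so by the intermediate
value theorem they are equal. The principal arguments of the eigenvalues of `v u⁻¹` therefore sum to
`ψ - φ`. Since principal arguments have least absolute value, they realise `m`, and the
one-parameter path with these angles is a path in the cover of length at most `m`:
`d̃ ≤ m ≤ d ≤ d̃`.
-/

open Set Filter Topology InnerProductGeometry

namespace PiecewiseC1On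

variable {E F : Type*} [NormedAddCommGroup E] [NormedSpace ℝ E]
  [NormedAddCommGroup F] [NormedSpace ℝ F] {γ : ℝ → E} {a b : ℝ}

theorem of_contDiffOn (hab : a ≤ b) (hγ : ContDiffOn ℝ 1 γ (Icc a b)) : PiecewiseC1On γ a b :=
  ⟨1, fun i => if i = 0 then a else b, by simp, by simp, by simpa using hab, by simpa using hγ⟩

theorem induction {P : ℝ → ℝ → Prop} (refl : ∀ t, P t t)
    (piece : ∀ s t, s < t → ContDiffOn ℝ 1 γ (Icc s t) → P s t)
    (trans : ∀ r s t, PiecewiseC1On γ r s → PiecewiseC1On γ s t → P r s → P s t → P r t)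
    (hγ : PiecewiseC1On γ a b) : P a b := by
  obtain ⟨n, τ, rfl, rfl, hτ, hC⟩ := hγ
  induction n with
  | zero => exact refl _
  | succ n ih =>
    have hinit : ∀ i < n, i < n + 1 := fun i hi => hi.trans n.lt_succ_self
    refine trans _ _ _
      ⟨n, τ, rfl, rfl, fun i hi => hτ i (hinit i hi), fun i hi => hC i (hinit i hi)⟩
      (.of_contDiffOn (hτ n n.lt_succ_self) (hC n n.lt_succ_self))
      (ih (fun i hi => hτ i (hinit i hi)) fun i hi => hC i (hinit i hi)) ?_
    rcases (hτ n n.lt_succ_self).eq_or_lt with heq | hlt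
    · exact heq ▸ refl _
    · exact piece _ _ hlt (hC n n.lt_succ_self)

theorem le (hγ : PiecewiseC1On γ a b) : a ≤ b :=
  hγ.induction le_refl (fun _ _ hst _ => hst.le) fun _ _ _ _ _ => le_trans

theorem continuousOn (hγ : PiecewiseC1On γ a b) : ContinuousOn γ (Icc a b) := by
  refine hγ.induction (P := fun s t => ContinuousOn γ (Icc s t)) (by simp)
    (fun _ _ _ hC => hC.continuousOn) fun r s t hrs hst ihrs ihst => ?_
  rw [← Icc_union_Icc_eq_Icc hrs.le hst.le]
  exact ihrs.union_of_isClosed ihst isClosed_Icc isClosed_Icc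

theorem restrict_right {t : ℝ} (hγ : PiecewiseC1On γ a b) (ht : t ∈ Icc a b) :
    PiecewiseC1On γ a t := by
  obtain ⟨n, τ, rfl, rfl, hτ, hC⟩ := hγ
  refine ⟨n, fun i => min (τ i) t, min_eq_left ht.1, min_eq_right ht.2,
    fun i hi => min_le_min_right _ (hτ i hi), fun i hi => ?_⟩
  beta_reduce
  rcases le_total (τ i) t with hit | hit
  · rw [min_eq_left hit]
    exact (hC i hi).mono (Icc_subset_Icc_right (min_le_left _ _))
  · rw [min_eq_right hit, min_eq_right (hit.trans (hτ i hi)), Icc_self]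
    exact fun x hx => mem_singleton_iff.1 hx ▸ contDiffWithinAt_singleton

theorem clm_comp (hγ : PiecewiseC1On γ a b) (A : E →L[ℝ] F) :
    PiecewiseC1On (fun t => A (γ t)) a b := by
  obtain ⟨n, τ, h0, hn, hτ, hC⟩ := hγ
  exact ⟨n, τ, h0, hn, hτ, fun i hi => A.contDiff.comp_contDiffOn (hC i hi)⟩

end PiecewiseC1On

section Length

variable {E F : Type*} [NormedAddCommGroup E] [NormedSpace ℝ E]
  [NormedAddCommGroup F] [NormedSpace ℝ F] {γ : ℝ → E} {a b : ℝ}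

theorem norm_derivWithin_Icc_eqOn_Ioo (γ : ℝ → E) (a b : ℝ) :
    EqOn (fun t => ‖derivWithin γ (Icc a b) t‖) (fun t => ‖deriv γ t‖) (Ioo a b) := fun t ht => by
  simp only [derivWithin_of_mem_nhds (Icc_mem_nhds ht.1 ht.2)]

theorem PiecewiseC1On.intervalIntegrable_norm_deriv (hγ : PiecewiseC1On γ a b) :
    IntervalIntegrable (fun t => ‖deriv γ t‖) MeasureTheory.volume a b := by
  refine hγ.induction (fun _ => .refl) (fun s t hst hC => ?_) fun _ _ _ _ _ => .trans
  have hcont : ContinuousOn (fun r => ‖derivWithin γ (Icc s t) r‖) (Icc s t) :=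
    (hC.continuousOn_derivWithin (uniqueDiffOn_Icc hst) le_rfl).norm
  have hint := hcont.intervalIntegrable_of_Icc (μ := MeasureTheory.volume) hst.le
  rw [intervalIntegrable_iff_integrableOn_Ioo_of_le hst.le] at hint ⊢
  exact hint.congr_fun (norm_derivWithin_Icc_eqOn_Ioo γ s t) measurableSet_Ioo

theorem hasDerivWithinAt_integral_Ici {g : ℝ → ℝ} {t : ℝ} (hg : ContinuousOn g (Icc a b))
    (ht : t ∈ Ico a b) : HasDerivWithinAt (fun r => ∫ q in a..r, g q) (g t) (Ici t) t := by
  have hsub : Ioc t b ⊆ Icc a b := fun z hz => ⟨ht.1.trans hz.1.le, hz.2⟩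
  have hle : 𝓝[>] t ≤ 𝓝[Icc a b] t :=
    nhdsWithin_le_of_mem (mem_of_superset (Ioc_mem_nhdsGT ht.2) hsub)
  refine intervalIntegral.integral_hasDerivWithinAt_right (t := Ioi t) ?_ ?_ ?_
  · exact (hg.mono (Icc_subset_Icc_right ht.2.le)).intervalIntegrable_of_Icc ht.1
  · exact (hg.stronglyMeasurableAtFilter_nhdsWithin measurableSet_Icc t).filter_mono hle
  · exact (hg t (Ico_subset_Icc_self ht)).mono_left hle

theorem pathLength_nonneg (γ : ℝ → E) (hab : a ≤ b) : 0 ≤ pathLength γ a b :=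
  intervalIntegral.integral_nonneg hab fun _ _ => norm_nonneg _

theorem PiecewiseC1On.pathLength_add {s : ℝ} (hab : PiecewiseC1On γ a s)
    (hbc : PiecewiseC1On γ s b) : pathLength γ a b = pathLength γ a s + pathLength γ s b :=
  (intervalIntegral.integral_add_adjacent_intervals hab.intervalIntegrable_norm_deriv
    hbc.intervalIntegrable_norm_deriv).symm

theorem PiecewiseC1On.pathLength_mono_right (hγ : PiecewiseC1On γ a b) {t : ℝ} (ht : t ∈ Icc a b) :
    pathLength γ a t ≤ pathLength γ a b :=
  intervalIntegral.integral_mono_interval le_rfl ht.1 ht.2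
    (.of_forall fun _ => norm_nonneg _) hγ.intervalIntegrable_norm_deriv

theorem PiecewiseC1On.pathLength_clm_comp_le (hγ : PiecewiseC1On γ a b) (A : E →L[ℝ] F) :
    pathLength (fun t => A (γ t)) a b ≤ ‖A‖ * pathLength γ a b := by
  refine hγ.induction (P := fun s t => pathLength (fun t => A (γ t)) s t ≤ ‖A‖ * pathLength γ s t)
    (by simp [pathLength]) (fun s t hst hC => ?_) fun r s t hrs hst ihrs ihst => ?_
  · have hpiece : PiecewiseC1On γ s t := .of_contDiffOn hst.le hC
    rw [pathLength, pathLength, ← intervalIntegral.integral_const_mul]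
    refine intervalIntegral.integral_mono_on_of_le_Ioo hst.le
      (hpiece.clm_comp A).intervalIntegrable_norm_deriv
      (hpiece.intervalIntegrable_norm_deriv.const_mul _) fun r hr => ?_
    have hdiff : DifferentiableAt ℝ γ r :=
      (hC.differentiableOn one_ne_zero).differentiableAt (Icc_mem_nhds hr.1 hr.2)
    have hderiv : deriv (fun t => A (γ t)) r = A (deriv γ r) :=
      (A.hasFDerivAt.comp_hasDerivAt r hdiff.hasDerivAt).deriv
    rw [hderiv]
    exact A.le_opNorm _
  · rw [hrs.pathLength_add hst, (hrs.clm_comp A).pathLength_add (hst.clm_comp A), mul_add]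
    exact add_le_add ihrs ihst

end Length

section Angle

variable {E : Type*} [NormedAddCommGroup E] [InnerProductSpace ℝ E]

theorem norm_sub_eq_two_mul_sin_half_angle {x y : E} (hx : ‖x‖ = 1) (hy : ‖y‖ = 1) :
    ‖y - x‖ = 2 * Real.sin (angle x y / 2) := by
  have hsin : 0 ≤ Real.sin (angle x y / 2) :=
    Real.sin_nonneg_of_nonneg_of_le_pi (by linarith [angle_nonneg x y])
      (by linarith [angle_nonneg x y, angle_le_pi x y])
  have hcos : Real.cos (angle x y) = 1 - 2 * Real.sin (angle x y / 2) ^ 2 := by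
    rw [Real.sin_sq_eq_half_sub, mul_div_cancel₀ _ two_ne_zero]
    ring
  have hinner : inner ℝ y x = Real.cos (angle x y) := by
    rw [real_inner_comm, ← cos_angle_mul_norm_mul_norm x y, hx, hy, mul_one, mul_one]
  refine (sq_eq_sq₀ (norm_nonneg _) (by positivity)).1 ?_
  rw [norm_sub_sq_real, hinner, hcos, hx, hy]
  ring

theorem angle_mul_cos_half_angle_le_norm_sub {x y : E} (hx : ‖x‖ = 1) (hy : ‖y‖ = 1) :
    angle x y * Real.cos (angle x y / 2) ≤ ‖y - x‖ := by
  rw [norm_sub_eq_two_mul_sin_half_angle hx hy]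
  rcases (angle_le_pi x y).lt_or_eq with hlt | heq
  · have hcos : 0 < Real.cos (angle x y / 2) :=
      Real.cos_pos_of_mem_Ioo ⟨by linarith [angle_nonneg x y, Real.pi_pos], by linarith⟩
    have htan := Real.le_tan (x := angle x y / 2) (by linarith [angle_nonneg x y]) (by linarith)
    rw [Real.tan_eq_sin_div_cos, le_div_iff₀ hcos] at htan
    linarith
  · simp [heq]

theorem continuousWithinAt_angle_right {c : ℝ → E} {s : Set ℝ} {t : ℝ} {x : E}
    (hc : ContinuousWithinAt c s t) (hx : x ≠ 0) (ht : c t ≠ 0) :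
    ContinuousWithinAt (fun r => angle x (c r)) s t :=
  (continuousAt_angle (x := (x, c t)) hx ht).comp_continuousWithinAt
    (f := fun r => (x, c r)) (continuousWithinAt_const.prodMk hc)

theorem eventually_slope_angle_lt {c : ℝ → E} {c' x : E} {t r : ℝ}
    (hc : HasDerivWithinAt c c' (Ioi t) t) (ht : ‖c t‖ = 1) (hunit : ∀ᶠ z in 𝓝[>] t, ‖c z‖ = 1)
    (hr : ‖c'‖ < r) : ∀ᶠ z in 𝓝[>] t, slope (fun z => angle x (c z)) t z < r := by
  have hct : c t ≠ 0 := norm_ne_zero_iff.1 (by simp [ht])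
  have hangle : Tendsto (fun z => angle (c t) (c z)) (𝓝[>] t) (𝓝 0) := by
    simpa [ContinuousWithinAt, angle_self hct] using
      continuousWithinAt_angle_right hc.continuousWithinAt hct hct
  have hcos : Tendsto (fun z => Real.cos (angle (c t) (c z) / 2)) (𝓝[>] t) (𝓝 1) := by
    simpa [Function.comp_def] using (Real.continuous_cos.tendsto _).comp (hangle.div_const 2)
  have hslope : Tendsto (fun z => ‖slope c t z‖ / Real.cos (angle (c t) (c z) / 2))
      (𝓝[>] t) (𝓝 ‖c'‖) := by
    have hslope' := (hasDerivWithinAt_iff_tendsto_slope' self_notMem_Ioi).1 hc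
    simpa [Pi.div_def] using hslope'.norm.div hcos one_ne_zero
  filter_upwards [self_mem_nhdsWithin, hunit, hslope.eventually_lt_const hr,
    hcos.eventually_const_lt zero_lt_one] with z hz hcz hlt hpos
  refine lt_of_le_of_lt ?_ hlt
  have htz : 0 < z - t := sub_pos.2 hz
  calc slope (fun z => angle x (c z)) t z
      = (angle x (c z) - angle x (c t)) / (z - t) := slope_def_field _ _ _
    _ ≤ angle (c t) (c z) / (z - t) := by
        gcongr
        linarith [angle_le_angle_add_angle x (c t) (c z)]
    _ ≤ ‖c z - c t‖ / Real.cos (angle (c t) (c z) / 2) / (z - t) := by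
        gcongr
        exact (le_div_iff₀ hpos).2 (angle_mul_cos_half_angle_le_norm_sub ht hcz)
    _ = ‖slope c t z‖ / Real.cos (angle (c t) (c z) / 2) := by
        rw [slope_def_module, norm_smul, norm_inv, Real.norm_of_nonneg htz.le]
        ring

theorem angle_le_pathLength_of_contDiffOn {c : ℝ → E} {a b : ℝ} (hab : a < b)
    (hc : ContDiffOn ℝ 1 c (Icc a b)) (hunit : ∀ t ∈ Icc a b, ‖c t‖ = 1) :
    angle (c a) (c b) ≤ pathLength c a b := by
  have hne : ∀ t ∈ Icc a b, c t ≠ 0 := fun t ht => norm_ne_zero_iff.1 (by simp [hunit t ht])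
  have ha : a ∈ Icc a b := left_mem_Icc.2 hab.le
  have hspeed : ContinuousOn (fun t => ‖derivWithin c (Icc a b) t‖) (Icc a b) :=
    (hc.continuousOn_derivWithin (uniqueDiffOn_Icc hab) le_rfl).norm
  rw [pathLength, ← intervalIntegral.integral_congr_Ioo_of_le hab.le
    (norm_derivWithin_Icc_eqOn_Ioo c a b)]
  refine image_le_of_liminf_slope_right_le_deriv_boundary (f := fun t => angle (c a) (c t))
    (fun t ht => continuousWithinAt_angle_right (hc.continuousOn t ht) (hne a ha) (hne t ht))
    (by simp [angle_self (hne a ha)]) ?_ (fun t ht => hasDerivWithinAt_integral_Ici hspeed ht)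
    (fun t ht r hr => Eventually.frequently ?_) (right_mem_Icc.2 hab.le)
  · simpa only [uIcc_of_le hab.le] using intervalIntegral.continuousOn_primitive_interval'
      (hspeed.intervalIntegrable_of_Icc hab.le) left_mem_uIcc
  · have hmem : Icc a b ∈ 𝓝[>] t :=
      mem_of_superset (Ioc_mem_nhdsGT ht.2) fun z hz => ⟨ht.1.trans hz.1.le, hz.2⟩
    have hderiv := (hc.differentiableOn one_ne_zero t (Ico_subset_Icc_self ht)).hasDerivWithinAt
    exact eventually_slope_angle_lt (hderiv.mono_of_mem_nhdsWithin hmem)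
      (hunit t (Ico_subset_Icc_self ht)) (mem_of_superset hmem hunit) hr

theorem PiecewiseC1On.angle_le_pathLength {c : ℝ → E} {a b : ℝ} (hc : PiecewiseC1On c a b)
    (hunit : ∀ t ∈ Icc a b, ‖c t‖ = 1) : angle (c a) (c b) ≤ pathLength c a b := by
  revert hunit
  refine hc.induction
    (P := fun s t => (∀ r ∈ Icc s t, ‖c r‖ = 1) → angle (c s) (c t) ≤ pathLength c s t)
    (fun t hunit => ?_) (fun _ _ => angle_le_pathLength_of_contDiffOn)
    fun r s t hrs hst ihrs ihst hunit => ?_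
  · have ht : c t ≠ 0 := norm_ne_zero_iff.1 (by simp [hunit t (by simp)])
    simp [angle_self ht, pathLength]
  · calc angle (c r) (c t)
        ≤ angle (c r) (c s) + angle (c s) (c t) := angle_le_angle_add_angle _ _ _
      _ ≤ pathLength c r s + pathLength c s t :=
          add_le_add (ihrs fun q hq => hunit q ⟨hq.1, hq.2.trans hst.le⟩)
            (ihst fun q hq => hunit q ⟨hrs.le.trans hq.1, hq.2⟩)
      _ = pathLength c r t := (hrs.pathLength_add hst).symm

end Angle

section Complex

variable {E : Type*} [NormedAddCommGroup E] [InnerProductSpace ℂ E]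

theorem angle_complex_smul_right [InnerProductSpace ℝ E] {x : E} {z : ℂ} (hx : x ≠ 0) (hz : z ≠ 0) :
    angle x (z • x) = |z.arg| := by
  have hinner : inner ℝ x (z • x) = (inner ℂ x (z • x)).re := by
    rw [real_inner_eq_norm_add_mul_self_sub_norm_mul_self_sub_norm_mul_self_div_two,
      ← RCLike.re_eq_complex_re,
      re_inner_eq_norm_add_mul_self_sub_norm_mul_self_sub_norm_mul_self_div_two]
  have hcos : (inner ℂ x (z • x)).re / (‖x‖ * ‖z • x‖) = z.re / ‖z‖ := by
    rw [inner_smul_right, inner_self_eq_norm_sq_to_K, norm_smul]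
    have hx' : ‖x‖ ≠ 0 := norm_ne_zero_iff.2 hx
    have hz' : ‖z‖ ≠ 0 := norm_ne_zero_iff.2 hz
    simp only [Complex.coe_algebraMap, ← Complex.ofReal_pow, Complex.re_mul_ofReal]
    field_simp
  rw [← Complex.angle_one_left hz, angle, angle, hinner, hcos]
  simp [Complex.inner]

theorem abs_arg_le_pathLength [CompleteSpace E] {γ : ℝ → E →L[ℂ] E} {a b : ℝ}
    (hγ : PiecewiseC1On γ a b) (hunitary : ∀ t ∈ Icc a b, γ t ∈ unitary (E →L[ℂ] E)) {x : E}
    (hx : ‖x‖ = 1) {z : ℂ} (hz : γ b x = z • γ a x) : |z.arg| ≤ pathLength γ a b := by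
  let _ : InnerProductSpace ℝ E := InnerProductSpace.complexToReal
  let eval : (E →L[ℂ] E) →L[ℝ] E := (ContinuousLinearMap.apply ℂ E x).restrictScalars ℝ
  have hunit : ∀ t ∈ Icc a b, ‖γ t x‖ = 1 := fun t ht => by
    rw [ContinuousLinearMap.norm_map_of_mem_unitary (hunitary t ht), hx]
  have hz0 : z ≠ 0 := by
    rintro rfl
    simpa [hz] using hunit b (right_mem_Icc.2 hγ.le)
  have hx0 : γ a x ≠ 0 := norm_ne_zero_iff.1 (by simp [hunit a (left_mem_Icc.2 hγ.le)])
  have heval : ‖eval‖ ≤ 1 := eval.opNorm_le_bound zero_le_one fun T => by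
    simpa [eval, hx] using T.le_opNorm x
  calc |z.arg| = angle (γ a x) (γ b x) := by rw [hz, angle_complex_smul_right hx0 hz0]
    _ ≤ pathLength (fun t => γ t x) a b := (hγ.clm_comp eval).angle_le_pathLength hunit
    _ ≤ ‖eval‖ * pathLength γ a b := hγ.pathLength_clm_comp_le eval
    _ ≤ pathLength γ a b := mul_le_of_le_one_left (pathLength_nonneg γ hγ.le) heval

end Complex

section Diagonal

variable {ι E : Type*} [Fintype ι] [NormedAddCommGroup E] [InnerProductSpace ℂ E]

theorem sum_smul_rankOne_apply_basis (e : OrthonormalBasis ι ℂ E) (d : ι → ℂ) (j : ι) :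
    (∑ k, d k • InnerProductSpace.rankOne ℂ (e k) (e k)) (e j) = d j • e j := by
  classical
  simp [sum_apply, orthonormal_iff_ite.1 e.orthonormal]

variable [CompleteSpace E]

/-- The operator with eigenvectors `e j` and eigenvalues `d j`, as a ⋆-homomorphism in `d`. The
bundling makes it contractive for the sup norm on `ι → ℂ` and unitary for unimodular `d`. -/
noncomputable def diagonalOp (e : OrthonormalBasis ι ℂ E) : (ι → ℂ) →⋆ₐ[ℂ] (E →L[ℂ] E) where
  toFun d := ∑ j, d j • InnerProductSpace.rankOne ℂ (e j) (e j)
  map_one' := ContinuousLinearMap.coe_injective <| e.toBasis.ext fun j => by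
    simpa using sum_smul_rankOne_apply_basis e 1 j
  map_mul' c d := ContinuousLinearMap.coe_injective <| e.toBasis.ext fun j => by
    simp only [OrthonormalBasis.coe_toBasis, ContinuousLinearMap.coe_coe,
      mul_apply_eq_comp, sum_smul_rankOne_apply_basis, map_smul, smul_smul, Pi.mul_apply, mul_comm]
  map_zero' := by simp
  map_add' c d := by simp [add_smul, Finset.sum_add_distrib]
  commutes' z := ContinuousLinearMap.coe_injective <| e.toBasis.ext fun j => by
    simpa using sum_smul_rankOne_apply_basis e (algebraMap ℂ (ι → ℂ) z) j
  map_star' d := by simp [ContinuousLinearMap.star_eq_adjoint]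

variable (e : OrthonormalBasis ι ℂ E)

theorem diagonalOp_apply_basis (d : ι → ℂ) (j : ι) : diagonalOp e d (e j) = d j • e j :=
  sum_smul_rankOne_apply_basis e d j

theorem eq_diagonalOp_iff {e : OrthonormalBasis ι ℂ E} {T : E →L[ℂ] E} {d : ι → ℂ} :
    T = diagonalOp e d ↔ ∀ j, T (e j) = d j • e j := by
  refine ⟨fun hT j => hT ▸ diagonalOp_apply_basis e d j, fun hT => ?_⟩
  refine ContinuousLinearMap.coe_injective (e.toBasis.ext fun j => ?_)
  simp [hT, diagonalOp_apply_basis]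

theorem toMatrix_diagonalOp [DecidableEq ι] (d : ι → ℂ) :
    LinearMap.toMatrix e.toBasis e.toBasis (diagonalOp e d : E →ₗ[ℂ] E) = Matrix.diagonal d := by
  ext i j
  rcases eq_or_ne i j with rfl | hij
  · simp [LinearMap.toMatrix_apply, diagonalOp_apply_basis]
  · simp [LinearMap.toMatrix_apply, diagonalOp_apply_basis, hij]

theorem det_diagonalOp (d : ι → ℂ) : LinearMap.det (diagonalOp e d : E →ₗ[ℂ] E) = ∏ j, d j := by
  classical
  rw [← LinearMap.det_toMatrix e.toBasis, toMatrix_diagonalOp, Matrix.det_diagonal]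

theorem roots_charpoly_diagonalOp [FiniteDimensional ℂ E] (d : ι → ℂ) :
    (diagonalOp e d : E →ₗ[ℂ] E).charpoly.roots = Finset.univ.val.map d := by
  classical
  rw [← LinearMap.charpoly_toMatrix _ e.toBasis, toMatrix_diagonalOp, Matrix.charpoly_diagonal,
    Polynomial.roots_prod _ _ (Finset.prod_ne_zero_iff.2 fun j _ => Polynomial.X_sub_C_ne_zero _)]
  simp

theorem diagonalOp_mem_unitary_iff {d : ι → ℂ} :
    diagonalOp e d ∈ unitary (E →L[ℂ] E) ↔ ∀ j, ‖d j‖ = 1 := by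
  refine ⟨fun h j => ?_, fun h => Unitary.map_mem (diagonalOp e) ?_⟩
  · have hnorm := ContinuousLinearMap.norm_map_of_mem_unitary h (e j)
    rwa [diagonalOp_apply_basis, norm_smul, e.norm_eq_one, mul_one] at hnorm
  · rw [Unitary.mem_iff_star_mul_self]
    ext j
    simp [Complex.conj_mul', h j]

open Module.End in
theorem exists_eq_diagonalOp [FiniteDimensional ℂ E] {n : ℕ} (hn : Module.finrank ℂ E = n)
    (T : E →L[ℂ] E) [IsStarNormal T] :
    ∃ (e : OrthonormalBasis (Fin n) ℂ E) (d : Fin n → ℂ), T = diagonalOp e d := by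
  classical
  let A : E →ₗ[ℂ] E := (realPart T : E →L[ℂ] E)
  let B : E →ₗ[ℂ] E := (imaginaryPart T : E →L[ℂ] E)
  have hA : A.IsSymmetric := ContinuousLinearMap.isSelfAdjoint_iff_isSymmetric.1 (realPart T).2
  have hB : B.IsSymmetric := ContinuousLinearMap.isSelfAdjoint_iff_isSymmetric.1 (imaginaryPart T).2
  have hAB : Commute A B := by
    ext x
    exact congrArg (fun S : E →L[ℂ] E => S x) (Commute.realPart_imaginaryPart T).eq
  have hinternal := LinearMap.IsSymmetric.directSum_isInternal_of_commute hA hB hAB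
  have hfinite : Fintype {i : ℂ × ℂ // eigenspace A i.2 ⊓ eigenspace B i.1 ≠ ⊥} :=
    (WellFoundedGT.finite_ne_bot_of_iSupIndep hinternal.submodule_iSupIndep).fintype
  have hinternal' := DirectSum.isInternal_ne_bot_iff.2 hinternal
  have horth := (LinearMap.IsSymmetric.orthogonalFamily_eigenspace_inf_eigenspace hA hB).comp
    (γ := {i : ℂ × ℂ // eigenspace A i.2 ⊓ eigenspace B i.1 ≠ ⊥}) Subtype.val_injective
  let eigen (j : Fin n) : ℂ × ℂ := (hinternal'.subordinateOrthonormalBasisIndex hn j horth).1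
  refine ⟨hinternal'.subordinateOrthonormalBasis hn horth,
    fun j => (eigen j).2 + Complex.I * (eigen j).1, eq_diagonalOp_iff.2 fun j => ?_⟩
  obtain ⟨hAj, hBj⟩ := Submodule.mem_inf.1
    (hinternal'.subordinateOrthonormalBasis_subordinate hn j horth)
  rw [mem_eigenspace_iff] at hAj hBj
  conv_lhs => rw [← realPart_add_I_smul_imaginaryPart T]
  rw [add_smul, mul_smul]
  exact congrArg₂ (fun y z => y + Complex.I • z) hAj hBj

end Diagonal

section Phase

open Complex

theorem abs_arg_exp_mul_I_le (x : ℝ) : |arg (exp (x * I))| ≤ |x| := by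
  rcases lt_or_ge |x| Real.pi with hx | hx
  · rw [abs_lt] at hx
    rw [arg_exp_mul_I, (toIocMod_eq_self Real.two_pi_pos).2 ⟨hx.1, by linarith⟩]
  · exact (abs_arg_le_pi _).trans hx

theorem exp_mul_I_ne_neg_one {x : ℝ} (hx : |x| < Real.pi) : exp (x * I) ≠ -1 := fun h => by
  have hle := abs_arg_exp_mul_I_le x
  rw [h, arg_neg_one, abs_of_pos Real.pi_pos] at hle
  exact hle.not_gt hx

theorem eq_of_exp_mul_I_eq {x y : ℝ} (hx : |x| < Real.pi) (hy : |y| < Real.pi)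
    (h : exp (x * I) = exp (y * I)) : x = y := by
  rw [abs_lt] at hx hy
  have heq := exp_inj_of_neg_pi_lt_of_le_pi (by simpa using hx.1) (by simpa using hx.2.le)
    (by simpa using hy.1) (by simpa using hy.2.le) h
  simpa using congrArg im heq

theorem abs_lt_pi_of_exp_mul_I_ne_neg_one {g : ℝ → ℝ} {a b : ℝ} (hab : a ≤ b)
    (hg : ContinuousOn g (Icc a b)) (ha : g a = 0)
    (hne : ∀ t ∈ Icc a b, exp (g t * I) ≠ -1) : |g b| < Real.pi := by
  by_contra! hb
  obtain ⟨t, ht, hgt⟩ := intermediate_value_Icc hab hg.abs ⟨by simpa [ha] using Real.pi_pos.le, hb⟩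
  rcases eq_or_eq_neg_of_abs_eq hgt with hpi | hpi
  · exact hne t ht (by rw [hpi, exp_pi_mul_I])
  · exact hne t ht (by rw [hpi, ofReal_neg, neg_mul, exp_neg_pi_mul_I])

variable {ι : Type*}

/-- The family `(e^{iθ_j})_j` of unimodular numbers with angles `θ`, as the candidate eigenvalues of
a unitary operator. -/
noncomputable def phase (θ : ι → ℝ) : ι → ℂ := fun j => exp (θ j * I)

theorem norm_phase (θ : ι → ℝ) (j : ι) : ‖phase θ j‖ = 1 :=
  norm_exp_ofReal_mul_I _

theorem phase_zero : phase (0 : ι → ℝ) = 1 := by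
  ext j
  simp [phase]

theorem phase_arg {d : ι → ℂ} (hd : ∀ j, ‖d j‖ = 1) : phase (fun j => arg (d j)) = d := by
  ext j
  simpa [phase, hd j] using norm_mul_exp_arg_mul_I (d j)

theorem hasDerivAt_phase_smul (θ : ι → ℝ) (t : ℝ) :
    HasDerivAt (fun s : ℝ => phase (s • θ)) (fun j => phase (t • θ) j * (θ j * I)) t := by
  refine hasDerivAt_pi.2 fun j => ?_
  simpa [phase, mul_assoc] using
    ((ofRealCLM.hasDerivAt (x := t)).mul_const (θ j * I : ℂ)).cexp

variable [Fintype ι]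

theorem prod_phase (θ : ι → ℝ) : ∏ j, phase θ j = exp ((∑ j, θ j : ℝ) * I) := by
  simp only [phase, ofReal_sum, Finset.sum_mul, exp_sum]

theorem exists_phase_eq_sum_eq [Nonempty ι] {d : ι → ℂ} {c : ℝ} (hd : ∀ j, ‖d j‖ = 1)
    (hc : ∏ j, d j = exp (c * I)) : ∃ θ : ι → ℝ, phase θ = d ∧ ∑ j, θ j = c := by
  classical
  rw [← phase_arg hd, prod_phase, eq_comm, exp_eq_exp_iff_exists_int] at hc
  obtain ⟨n, hn⟩ := hc
  refine ⟨(fun j => arg (d j)) + Pi.single (Classical.arbitrary ι) (n * (2 * Real.pi)), ?_, ?_⟩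
  · ext j
    rw [← phase_arg hd, phase, phase, phase_arg hd, exp_eq_exp_iff_exists_int]
    rcases eq_or_ne j (Classical.arbitrary ι) with rfl | hj
    · refine ⟨n, ?_⟩
      rw [Pi.add_apply, Pi.single_eq_same]
      push_cast
      ring
    · exact ⟨0, by simp [hj]⟩
  · simpa [Finset.sum_add_distrib] using (congrArg im hn).symm

theorem contDiff_phase_smul (θ : ι → ℝ) : ContDiff ℝ 1 fun t : ℝ => phase (t • θ) := by
  refine contDiff_pi.2 fun j => ?_
  simp only [phase, Pi.smul_apply, smul_eq_mul]
  exact ((ofRealCLM.contDiff.comp (contDiff_id.mul contDiff_const)).mul contDiff_const).cexp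

theorem pathLength_phase_smul (θ : ι → ℝ) : pathLength (fun t : ℝ => phase (t • θ)) 0 1 = ‖θ‖ := by
  have hspeed : ∀ t : ℝ, ‖deriv (fun s : ℝ => phase (s • θ)) t‖ = ‖θ‖ := fun t => by
    simp [(hasDerivAt_phase_smul θ t).deriv, Pi.norm_def, norm_phase, nnnorm]
  simp [pathLength, hspeed]

end Phase

section UnitaryPaths

variable {ι E : Type*} [Fintype ι] [NormedAddCommGroup E] [InnerProductSpace ℂ E] [CompleteSpace E]
  {e : OrthonormalBasis ι ℂ E}

theorem norm_arg_le_pathLength {γ : ℝ → E →L[ℂ] E} {a b : ℝ} {d : ι → ℂ}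
    (hγ : PiecewiseC1On γ a b) (hunitary : ∀ t ∈ Icc a b, γ t ∈ unitary (E →L[ℂ] E))
    (hd : γ b * star (γ a) = diagonalOp e d) : ‖fun j => (d j).arg‖ ≤ pathLength γ a b := by
  have ha : γ a ∈ unitary (E →L[ℂ] E) := hunitary a (left_mem_Icc.2 hγ.le)
  refine (pi_norm_le_iff_of_nonneg (pathLength_nonneg γ hγ.le)).2 fun j => ?_
  refine abs_arg_le_pathLength hγ hunitary (x := star (γ a) (e j)) ?_ ?_
  · rw [ContinuousLinearMap.norm_map_of_mem_unitary (Unitary.star_mem ha), e.norm_eq_one]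
  · rw [← mul_apply_eq_comp, ← mul_apply_eq_comp, hd, Unitary.mul_star_self_of_mem ha,
      diagonalOp_apply_basis, one_apply_eq_self]

theorem abs_sum_arg_le_card_mul_pathLength {γ : ℝ → E →L[ℂ] E} {a b : ℝ} {d : ι → ℂ}
    (hγ : PiecewiseC1On γ a b) (hunitary : ∀ t ∈ Icc a b, γ t ∈ unitary (E →L[ℂ] E))
    (hd : γ b * star (γ a) = diagonalOp e d) :
    |∑ j, (d j).arg| ≤ Fintype.card ι * pathLength γ a b := by
  calc |∑ j, (d j).arg| ≤ ∑ j, |(d j).arg| := Finset.abs_sum_le_sum_abs _ _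
    _ ≤ Fintype.card ι * ‖fun j => (d j).arg‖ := by
        simpa using Pi.sum_norm_apply_le_norm fun j => (d j).arg
    _ ≤ Fintype.card ι * pathLength γ a b := by
        gcongr
        exact norm_arg_le_pathLength hγ hunitary hd

theorem contDiff_diagonalOp_phase_smul (e : OrthonormalBasis ι ℂ E) (θ : ι → ℝ) :
    ContDiff ℝ 1 fun t : ℝ => diagonalOp e (phase (t • θ)) :=
  ((diagonalOp e).toLinearMap.toContinuousLinearMap.restrictScalars ℝ).contDiff.comp
    (contDiff_phase_smul θ)

theorem pathLength_diagonalOp_phase_smul_mul_le (e : OrthonormalBasis ι ℂ E) (θ : ι → ℝ)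
    {u : E →L[ℂ] E} (hu : ‖u‖ ≤ 1) :
    pathLength (fun t : ℝ => diagonalOp e (phase (t • θ)) * u) 0 1 ≤ ‖θ‖ := by
  have hcontr : ∀ d, ‖diagonalOp e d * u‖ ≤ 1 * ‖d‖ := fun d => by
    calc ‖diagonalOp e d * u‖ ≤ ‖diagonalOp e d‖ * ‖u‖ := norm_mul_le _ _
      _ ≤ ‖d‖ * 1 := by
          gcongr
          exact NonUnitalStarAlgHom.norm_apply_le _ d
      _ = 1 * ‖d‖ := mul_comm _ _
  let A : (ι → ℂ) →L[ℝ] E →L[ℂ] E :=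
    ((LinearMap.mulRight ℂ u ∘ₗ (diagonalOp e).toLinearMap).restrictScalars ℝ).mkContinuous 1 hcontr
  have hphase : PiecewiseC1On (fun t : ℝ => phase (t • θ)) 0 1 :=
    .of_contDiffOn zero_le_one (contDiff_phase_smul θ).contDiffOn
  calc pathLength (fun t : ℝ => A (phase (t • θ))) 0 1
      ≤ ‖A‖ * pathLength (fun t : ℝ => phase (t • θ)) 0 1 := hphase.pathLength_clm_comp_le A
    _ = ‖A‖ * ‖θ‖ := by rw [pathLength_phase_smul]
    _ ≤ ‖θ‖ := mul_le_of_le_one_left (norm_nonneg _)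
        (LinearMap.mkContinuous_norm_le _ zero_le_one _)

end UnitaryPaths

section Cover

variable {N : ℕ} {u v : Op N} {φ ψ : ℝ} {e : OrthonormalBasis (Fin N) ℂ (Hsp N)} {d : Fin N → ℂ}

namespace InUCover

protected theorem mul (hu : InUCover N u φ) (hv : InUCover N v ψ) : InUCover N (u * v) (φ + ψ) := by
  refine ⟨mul_mem hu.1 hv.1, ?_⟩
  rw [ContinuousLinearMap.toLinearMap_mul, map_mul, hu.2, hv.2, ← Complex.exp_add]
  push_cast
  ring_nf

protected theorem star (hu : InUCover N u φ) : InUCover N (star u) (-φ) := by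
  refine ⟨Unitary.star_mem hu.1, ?_⟩
  have hdet : LinearMap.det (star u * u : Op N).toLinearMap = 1 := by
    rw [Unitary.star_mul_self_of_mem hu.1]
    simp
  rw [ContinuousLinearMap.toLinearMap_mul, map_mul, hu.2] at hdet
  rw [eq_inv_of_mul_eq_one_left hdet, Complex.ofReal_neg, neg_mul, Complex.exp_neg]

theorem mul_star (hu : InUCover N u φ) (hv : InUCover N v ψ) :
    InUCover N (v * star u) (ψ - φ) :=
  sub_eq_add_neg ψ φ ▸ hv.mul hu.star

protected theorem exists_eq_diagonalOp (hu : InUCover N u φ) :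
    ∃ (e : OrthonormalBasis (Fin N) ℂ (Hsp N)) (d : Fin N → ℂ),
      u = diagonalOp e d ∧ ∀ j, ‖d j‖ = 1 := by
  have _ : IsStarNormal u := isStarNormal_of_mem_unitary hu.1
  obtain ⟨e, d, rfl⟩ := exists_eq_diagonalOp finrank_euclideanSpace_fin u
  exact ⟨e, d, rfl, (diagonalOp_mem_unitary_iff e).1 hu.1⟩

theorem prod_eq (h : InUCover N (diagonalOp e d) φ) : ∏ j, d j = Complex.exp (φ * Complex.I) :=
  (det_diagonalOp e d).symm.trans h.2

theorem exp_sum_arg (h : InUCover N (diagonalOp e d) φ) :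
    Complex.exp ((∑ j, (d j).arg : ℝ) * Complex.I) = Complex.exp (φ * Complex.I) := by
  rw [← prod_phase, phase_arg ((diagonalOp_mem_unitary_iff e).1 h.1), h.prod_eq]

end InUCover

theorem inUCover_diagonalOp_phase (e : OrthonormalBasis (Fin N) ℂ (Hsp N)) (θ : Fin N → ℝ) :
    InUCover N (diagonalOp e (phase θ)) (∑ j, θ j) :=
  ⟨(diagonalOp_mem_unitary_iff e).2 (norm_phase θ), (det_diagonalOp e _).trans (prod_phase θ)⟩

/-- The lengths of the piecewise C¹ curves in `U(H)` from `u` to `v`, so that `geoDist` is the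
infimum of this set. -/
def geoLengths (N : ℕ) (u v : Op N) : Set ℝ :=
  {l | ∃ (a b : ℝ) (γ : ℝ → Op N), a ≤ b ∧ PiecewiseC1On γ a b ∧
    (∀ t ∈ Icc a b, γ t ∈ unitary (Op N)) ∧ γ a = u ∧ γ b = v ∧ l = pathLength γ a b}

/-- The lengths of the piecewise C¹ curves in `Ũ(H)` from `(u, φ)` to `(v, ψ)`, so that
`ucoverDist` is the infimum of this set. -/
def ucoverLengths (N : ℕ) (u : Op N) (φ : ℝ) (v : Op N) (ψ : ℝ) : Set ℝ :=
  {l | ∃ (a b : ℝ) (γ : ℝ → Op N) (f : ℝ → ℝ), a ≤ b ∧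
    PiecewiseC1On (fun t => (γ t, f t)) a b ∧ (∀ t ∈ Icc a b, InUCover N (γ t) (f t)) ∧
    γ a = u ∧ f a = φ ∧ γ b = v ∧ f b = ψ ∧ l = pathLength γ a b}

theorem ucoverLengths_subset_geoLengths : ucoverLengths N u φ v ψ ⊆ geoLengths N u v := by
  rintro l ⟨a, b, γ, f, hab, hγf, hcover, ha, -, hb, -, hl⟩
  exact ⟨a, b, γ, hab, hγf.clm_comp (.fst ℝ _ _), fun t ht => (hcover t ht).1, ha, hb, hl⟩

theorem bddBelow_geoLengths (u v : Op N) : BddBelow (geoLengths N u v) := by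
  refine ⟨0, ?_⟩
  rintro l ⟨a, b, γ, hab, -, -, -, -, rfl⟩
  exact pathLength_nonneg γ hab

theorem exists_mem_ucoverLengths_le_norm (hu : InUCover N u φ) {θ : Fin N → ℝ}
    (hθ : v * star u = diagonalOp e (phase θ)) (hsum : ∑ j, θ j = ψ - φ) :
    ∃ l ∈ ucoverLengths N u φ v ψ, l ≤ ‖θ‖ := by
  have hunorm : ‖u‖ ≤ 1 := u.opNorm_le_bound zero_le_one fun x => by
    rw [ContinuousLinearMap.norm_map_of_mem_unitary hu.1, one_mul]
  refine ⟨_, ⟨0, 1, fun t => diagonalOp e (phase (t • θ)) * u, fun t => t * (ψ - φ) + φ,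
    zero_le_one, ?_, fun t _ => ?_, ?_, ?_, ?_, ?_, rfl⟩,
    pathLength_diagonalOp_phase_smul_mul_le e θ hunorm⟩
  · refine .of_contDiffOn zero_le_one (ContDiff.contDiffOn ?_)
    exact ((contDiff_diagonalOp_phase_smul e θ).mul contDiff_const).prodMk
      ((contDiff_id.mul contDiff_const).add contDiff_const)
  · refine .mul ?_ hu
    simpa [← hsum, Finset.mul_sum] using inUCover_diagonalOp_phase e (t • θ)
  · simp [phase_zero]
  · simp
  · simp only [one_smul]
    rw [← hθ, mul_assoc, Unitary.star_mul_self_of_mem hu.1, mul_one]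
  · simp

theorem ucoverLengths_nonempty (hN : 1 ≤ N) (hu : InUCover N u φ) (hv : InUCover N v ψ) :
    (ucoverLengths N u φ v ψ).Nonempty := by
  have : Nonempty (Fin N) := Fin.pos_iff_nonempty.1 hN
  have hw := hu.mul_star hv
  obtain ⟨e, d, hd, hnorm⟩ := hw.exists_eq_diagonalOp
  obtain ⟨θ, rfl, hsum⟩ := exists_phase_eq_sum_eq hnorm (hd ▸ hw).prod_eq
  obtain ⟨l, hl, -⟩ := exists_mem_ucoverLengths_le_norm hu hd hsum
  exact ⟨l, hl⟩

theorem sum_arg_eq_of_mul_pathLength_lt_pi {γ : ℝ → Op N} {f : ℝ → ℝ} {a b : ℝ}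
    (hγf : PiecewiseC1On (fun t => (γ t, f t)) a b) (hcover : ∀ t ∈ Icc a b, InUCover N (γ t) (f t))
    (hlength : N * pathLength γ a b < Real.pi) (hd : γ b * star (γ a) = diagonalOp e d) :
    ∑ j, (d j).arg = f b - f a := by
  have hγ : PiecewiseC1On γ a b := hγf.clm_comp (.fst ℝ _ _)
  have ha : a ∈ Icc a b := left_mem_Icc.2 hγf.le
  have hb : b ∈ Icc a b := right_mem_Icc.2 hγf.le
  have hcover' : ∀ t ∈ Icc a b, InUCover N (γ t * star (γ a)) (f t - f a) := fun t ht =>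
    (hcover a ha).mul_star (hcover t ht)
  have hsum_lt : ∀ t ∈ Icc a b, ∀ (e : OrthonormalBasis (Fin N) ℂ (Hsp N)) (d : Fin N → ℂ),
      γ t * star (γ a) = diagonalOp e d → |∑ j, (d j).arg| < Real.pi := fun t ht e d hd => by
    calc |∑ j, (d j).arg| ≤ N * pathLength γ a t := by
          simpa using abs_sum_arg_le_card_mul_pathLength (hγ.restrict_right ht)
            (fun s hs => (hcover s ⟨hs.1, hs.2.trans ht.2⟩).1) hd
      _ ≤ N * pathLength γ a b := by
          gcongr
          exact hγ.pathLength_mono_right ht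
      _ < Real.pi := hlength
  refine eq_of_exp_mul_I_eq (hsum_lt b hb e d hd) ?_ (hd ▸ hcover' b hb).exp_sum_arg
  refine abs_lt_pi_of_exp_mul_I_ne_neg_one (g := fun t => f t - f a) hγf.le
    ((continuous_snd.comp_continuousOn hγf.continuousOn).sub continuousOn_const) (sub_self _)
    fun t ht => ?_
  obtain ⟨e', d', hd', -⟩ := (hcover' t ht).exists_eq_diagonalOp
  have hdiag : InUCover N (diagonalOp e' d') (f t - f a) := hd' ▸ hcover' t ht
  rw [← hdiag.exp_sum_arg]
  exact exp_mul_I_ne_neg_one (hsum_lt t ht e' d' hd')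

theorem norm_arg_le_geoDist (hne : (geoLengths N u v).Nonempty)
    (hd : v * star u = diagonalOp e d) : ‖fun j => (d j).arg‖ ≤ geoDist N u v := by
  refine le_csInf hne ?_
  rintro l ⟨a, b, γ, -, hγ, hunitary, rfl, rfl, rfl⟩
  exact norm_arg_le_pathLength hγ hunitary hd

theorem sum_arg_eq_of_ucoverDist_lt (hN : 1 ≤ N) (hne : (ucoverLengths N u φ v ψ).Nonempty)
    (hlt : ucoverDist N u φ v ψ < Real.pi / N) (hd : v * star u = diagonalOp e d) :
    ∑ j, (d j).arg = ψ - φ := by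
  obtain ⟨l, ⟨a, b, γ, f, -, hγf, hcover, rfl, rfl, rfl, rfl, rfl⟩, hl⟩ :=
    exists_lt_of_csInf_lt hne hlt
  rw [lt_div_iff₀' (by exact_mod_cast hN)] at hl
  exact sum_arg_eq_of_mul_pathLength_lt_pi hγf hcover hl hd

theorem iSup_abs_eq_norm {ι : Type*} [Fintype ι] (θ : ι → ℝ) : ⨆ j, |θ j| = ‖θ‖ := by
  refine le_antisymm (Real.iSup_le (norm_le_pi_norm θ) (norm_nonneg θ)) ?_
  exact (pi_norm_le_iff_of_nonneg (Real.iSup_nonneg fun _ => abs_nonneg _)).2 fun j =>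
    le_ciSup (f := fun j => |θ j|) (finite_range _).bddAbove j

theorem mval_eq_norm_arg {c : ℝ} (hnorm : ∀ j, ‖d j‖ = 1) (hsum : ∑ j, (d j).arg = c) :
    mval N (diagonalOp e d) c = ‖fun j => (d j).arg‖ := by
  have heigen : eigenvalueMultiset N (diagonalOp e d) = Finset.univ.val.map d :=
    roots_charpoly_diagonalOp e d
  refine IsLeast.csInf_eq ⟨⟨fun j => (d j).arg, ⟨?_, hsum⟩, (iSup_abs_eq_norm _).symm⟩, ?_⟩
  · rw [heigen]
    exact congrArg (Finset.univ.val.map ·) (phase_arg hnorm)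
  · rintro _ ⟨θ, ⟨hθ, -⟩, rfl⟩
    rw [iSup_abs_eq_norm]
    refine (pi_norm_le_iff_of_nonneg (norm_nonneg θ)).2 fun j => ?_
    have hj : d j ∈ Finset.univ.val.map (phase θ) := by
      rw [show Finset.univ.val.map (phase θ) = _ from hθ, heigen]
      exact Multiset.mem_map_of_mem d (Finset.mem_univ j)
    obtain ⟨k, -, hk⟩ := Multiset.mem_map.1 hj
    rw [← hk]
    exact (abs_arg_exp_mul_I_le (θ k)).trans (norm_le_pi_norm θ k)

theorem ucoverDist_eq_geoDist_eq_mval_of_le_general (hN : 1 ≤ N) (hu : InUCover N u φ)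
    (hv : InUCover N v ψ) (hlt : ucoverDist N u φ v ψ < Real.pi / N) :
    ucoverDist N u φ v ψ = geoDist N u v ∧ geoDist N u v = mval N (v * star u) (ψ - φ) := by
  obtain ⟨e, d, hd, hnorm⟩ := (hu.mul_star hv).exists_eq_diagonalOp
  have hne : (ucoverLengths N u φ v ψ).Nonempty := ucoverLengths_nonempty hN hu hv
  have hsum : ∑ j, (d j).arg = ψ - φ := sum_arg_eq_of_ucoverDist_lt hN hne hlt hd
  have hgeo : geoDist N u v ≤ ucoverDist N u φ v ψ :=
    csInf_le_csInf (bddBelow_geoLengths u v) hne ucoverLengths_subset_geoLengths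
  have harg : ‖fun j => (d j).arg‖ ≤ geoDist N u v :=
    norm_arg_le_geoDist (hne.mono ucoverLengths_subset_geoLengths) hd
  have hcover : ucoverDist N u φ v ψ ≤ ‖fun j => (d j).arg‖ := by
    obtain ⟨l, hl, hle⟩ :=
      exists_mem_ucoverLengths_le_norm hu (hd.trans (by rw [phase_arg hnorm])) hsum
    exact (csInf_le ((bddBelow_geoLengths u v).mono ucoverLengths_subset_geoLengths) hl).trans hle
  rw [hd, mval_eq_norm_arg hnorm hsum]
  exact ⟨(hcover.trans harg).antisymm hgeo, (hgeo.trans hcover).antisymm harg⟩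

end Cover

/-- if `d̃((u,φ),(v,ψ)) ≤ π/(2N)` then
`d̃((u,φ),(v,ψ)) = d(u,v) = m`. -/
theorem ucoverDist_eq_geoDist_eq_mval_of_le (N : ℕ) (hN : 1 ≤ N)
    (u v : unitary (Op N)) (φ ψ : ℝ)
    (hu : InUCover N ↑u φ) (hv : InUCover N ↑v ψ)
    (h : ucoverDist N ↑u φ ↑v ψ ≤ Real.pi / (2 * N)) :
    ucoverDist N ↑u φ ↑v ψ = geoDist N ↑u ↑v ∧
      geoDist N ↑u ↑v = mval N ↑(v * u⁻¹) (ψ - φ) := by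
  have hN0 : (0 : ℝ) < N := by exact_mod_cast hN
  exact ucoverDist_eq_geoDist_eq_mval_of_le_general hN hu hv
    (h.trans_lt (div_lt_div_of_pos_left Real.pi_pos hN0 (by linarith)))
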